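/- arXiv:2205.15815 — 7 statements merged into one kernel-verified Lean document; each statement's English description precedes it below -/
import Mathlib

section
/- For every n ≥ 1, the fully symmetrized product of Kronecker deltas of rank 2n, namely t⁰(ι) := (1/(2n)!) · Σ_{σ ∈ Perm(Fin 2n)} Π_{j=0}^{n−1} δ(ι(σ(2j)), ι(σ(2j+1))) for ι : Fin 2n → Fin 3, is an invariant tensor of sl(2,ℂ): for every c ∈ Fin 3 and every ι : Fin 2n → Fin 3, Σ_{j ∈ Fin 2n} Σ_{b ∈ Fin 3} f(c, ι(j), b) · t⁰(Function.update ι j b) = 0. -/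
/-- The Levi-Civita symbol on three indices, totally antisymmetric with `ε(0,1,2) = 1`. -/
def lev (a b c : Fin 3) : ℂ :=
  if (a, b, c) = (0, 1, 2) ∨ (a, b, c) = (1, 2, 0) ∨ (a, b, c) = (2, 0, 1) then 1
  else if (a, b, c) = (2, 1, 0) ∨ (a, b, c) = (1, 0, 2) ∨ (a, b, c) = (0, 2, 1) then -1
  else 0

/-- The Kronecker delta on `Fin 3`, valued in `ℂ`. -/
def kdelta (a b : Fin 3) : ℂ := if a = b then 1 else 0

/-- The structure constants `f(a,b,c) = i√2 ε(a,b,c)` of `sl(2,ℂ)` in an orthonormal basis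
for the trace form. -/
noncomputable def fconst (a b c : Fin 3) : ℂ := Complex.I * (Real.sqrt 2 : ℂ) * lev a b c

/-- The fully symmetrized product of Kronecker deltas of rank `2n`:
`t⁰(ι) = (1/(2n)!) Σ_{σ ∈ Perm(Fin 2n)} Π_{j<n} δ(ι(σ(2j)), ι(σ(2j+1)))`. -/
noncomputable def symdelta (n : ℕ) (ι : Fin (2 * n) → Fin 3) : ℂ :=
  (1 / ((2 * n).factorial : ℂ)) *
    ∑ σ : Equiv.Perm (Fin (2 * n)),
      ∏ j : Fin n,
        kdelta (ι (σ ⟨2 * j.1, by omega⟩)) (ι (σ ⟨2 * j.1 + 1, by omega⟩))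

/-! Each `x` in a Lie algebra acts on tensors as a derivation, one slot at a time. Such an action
annihilates a tensor product of invariant tensors (Leibniz rule), commutes with relabelling the
slots and is linear. Hence it is enough that it annihilates the single form `δ`. A matrix `A` sends
the bilinear form `B` to `A * B + B * Aᵀ`, which for `B = δ` vanishes because `fconst c` is
antisymmetric. -/

open Finset Matrix

theorem prod_update_sigma {P X R : Type*} {K : P → Type*} [Fintype P] [DecidableEq P]
    [∀ p, DecidableEq (K p)] [CommMonoid R] (T : ∀ p, (K p → X) → R) (ι : (Σ p, K p) → X)
    (p : P) (k : K p) (b : X) :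
    ∏ q, T q (Function.update ι ⟨p, k⟩ b ∘ Sigma.mk q) =
      T p (Function.update (ι ∘ Sigma.mk p) k b) * ∏ q ∈ univ.erase p, T q (ι ∘ Sigma.mk q) := by
  rw [← mul_prod_erase _ _ (mem_univ p),
    Function.update_comp_eq_of_injective ι sigma_mk_injective]
  congr 1
  refine prod_congr rfl fun q hq => ?_
  rw [Function.update_comp_eq_of_forall_ne]
  exact fun _ h => ne_of_mem_erase hq (congrArg Sigma.fst h)

section SlotAction

variable {I J X R : Type*} [Fintype I] [DecidableEq I] [Fintype J] [DecidableEq J]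
  [Fintype X] [CommSemiring R]

/-- The action of a matrix `A` on tensors with index set `X` and slots `I`, as a derivation: the sum
over all slots of `A` applied in that slot. A tensor is encoded by its array of components. -/
def slotAction (A : Matrix X X R) : ((I → X) → R) →ₗ[R] ((I → X) → R) where
  toFun t ι := ∑ j, ∑ b, A (ι j) b * t (Function.update ι j b)
  map_add' s t := by
    ext ι
    simp only [Pi.add_apply, mul_add, sum_add_distrib]
  map_smul' r t := by
    ext ι
    simp only [Pi.smul_apply, smul_eq_mul, mul_sum, mul_left_comm, RingHom.id_apply]

theorem slotAction_apply (A : Matrix X X R) (t : (I → X) → R) (ι : I → X) :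
    slotAction A t ι = ∑ j, ∑ b, A (ι j) b * t (Function.update ι j b) :=
  rfl

/-- The submodule of tensors annihilated by the derivation action of the matrix `A`. -/
def invariantTensors (I : Type*) [Fintype I] [DecidableEq I] (A : Matrix X X R) :
    Submodule R ((I → X) → R) :=
  LinearMap.ker (slotAction A)

theorem slotAction_reindex (A : Matrix X X R) (e : J ≃ I) (t : (J → X) → R) (ι : I → X) :
    slotAction A (fun ι => t (ι ∘ e)) ι = slotAction A t (ι ∘ e) := by
  simp only [slotAction_apply, ← e.sum_comp, Function.comp_apply,
    Function.update_comp_eq_of_injective _ e.injective]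

theorem reindex_mem_invariantTensors {A : Matrix X X R} (e : J ≃ I) {t : (J → X) → R}
    (ht : t ∈ invariantTensors J A) : (fun ι : I → X => t (ι ∘ e)) ∈ invariantTensors I A :=
  LinearMap.mem_ker.2 <| funext fun ι =>
    (slotAction_reindex A e t ι).trans (congrFun (LinearMap.mem_ker.1 ht) (ι ∘ e))

section Prod

variable {P : Type*} {K : P → Type*} [Fintype P] [DecidableEq P] [∀ p, Fintype (K p)]
  [∀ p, DecidableEq (K p)]

theorem slotAction_prod (A : Matrix X X R) (T : ∀ p, (K p → X) → R) (ι : (Σ p, K p) → X) :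
    slotAction A (fun ι => ∏ p, T p (ι ∘ Sigma.mk p)) ι =
      ∑ p, slotAction A (T p) (ι ∘ Sigma.mk p) * ∏ q ∈ univ.erase p, T q (ι ∘ Sigma.mk q) := by
  simp only [slotAction_apply, Fintype.sum_sigma, prod_update_sigma, sum_mul, mul_assoc,
    Function.comp_apply]

theorem prod_mem_invariantTensors {A : Matrix X X R} {T : ∀ p, (K p → X) → R}
    (hT : ∀ p, T p ∈ invariantTensors (K p) A) :
    (fun ι : (Σ p, K p) → X => ∏ p, T p (ι ∘ Sigma.mk p)) ∈ invariantTensors (Σ p, K p) A := by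
  refine LinearMap.mem_ker.2 <| funext fun ι => ?_
  simp only [slotAction_prod, LinearMap.mem_ker.1 (hT _), Pi.zero_apply, zero_mul, sum_const_zero]

end Prod

theorem slotAction_bilin (A B : Matrix X X R) (κ : Fin 2 → X) :
    slotAction A (fun κ => B (κ 0) (κ 1)) κ = (A * B + B * Aᵀ) (κ 0) (κ 1) := by
  simp [slotAction_apply, Fin.sum_univ_two, Matrix.mul_apply, mul_comm]

theorem bilin_mem_invariantTensors {A B : Matrix X X R} (hAB : A * B + B * Aᵀ = 0) :
    (fun κ : Fin 2 → X => B (κ 0) (κ 1)) ∈ invariantTensors (Fin 2) A :=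
  LinearMap.mem_ker.2 <| funext fun κ => by rw [slotAction_bilin, hAB]; rfl

theorem prod_bilin_mem_invariantTensors {P : Type*} [Fintype P] {A B : Matrix X X R}
    (hAB : A * B + B * Aᵀ = 0) (e : (Σ _ : P, Fin 2) ≃ I) :
    (fun ι : I → X => ∏ p, B (ι (e ⟨p, 0⟩)) (ι (e ⟨p, 1⟩))) ∈ invariantTensors I A := by
  classical
  simpa only [Function.comp_apply] using reindex_mem_invariantTensors e
    (prod_mem_invariantTensors fun _ : P => bilin_mem_invariantTensors hAB)

end SlotAction

/-- The division of `2 * n` slots into `n` consecutive pairs. -/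
def pairSlots (n : ℕ) : (Σ _ : Fin n, Fin 2) ≃ Fin (2 * n) :=
  (Equiv.sigmaEquivProd (Fin n) (Fin 2)).trans (finProdFinEquiv.trans (finCongr (mul_comm n 2)))

theorem pairSlots_zero {n : ℕ} (j : Fin n) : pairSlots n ⟨j, 0⟩ = ⟨2 * j, by omega⟩ := by
  ext
  simp [pairSlots]

theorem pairSlots_one {n : ℕ} (j : Fin n) : pairSlots n ⟨j, 1⟩ = ⟨2 * j + 1, by omega⟩ := by
  ext
  simp [pairSlots, add_comm]

theorem lev_swap_right (c a b : Fin 3) : lev c a b = -lev c b a := by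
  fin_cases c <;> fin_cases a <;> fin_cases b <;> simp [lev]

theorem transpose_fconst (c : Fin 3) : (of (fconst c))ᵀ = -of (fconst c) := by
  ext a b
  rw [transpose_apply, neg_apply, of_apply, fconst, lev_swap_right, mul_neg, of_apply, fconst]

theorem fconst_mul_kdelta_add_kdelta_mul_transpose (c : Fin 3) :
    of (fconst c) * of kdelta + of kdelta * (of (fconst c))ᵀ = 0 := by
  have kdelta_eq_one : of kdelta = 1 := rfl
  rw [kdelta_eq_one, mul_one, one_mul, transpose_fconst, add_neg_cancel]

theorem stmt_5_general {X R : Type*} [Fintype X] [CommSemiring R] {A B : Matrix X X R}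
    (hAB : A * B + B * Aᵀ = 0) (r : R) (n : ℕ) :
    (fun ι : Fin (2 * n) → X => r * ∑ σ : Equiv.Perm (Fin (2 * n)), ∏ j : Fin n,
      B (ι (σ ⟨2 * j, by omega⟩)) (ι (σ ⟨2 * j + 1, by omega⟩))) ∈
      invariantTensors (Fin (2 * n)) A := by
  have pairing_mem (σ : Equiv.Perm (Fin (2 * n))) :
      (fun ι : Fin (2 * n) → X => ∏ j : Fin n,
        B (ι (σ ⟨2 * j, by omega⟩)) (ι (σ ⟨2 * j + 1, by omega⟩))) ∈
        invariantTensors (Fin (2 * n)) A := by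
    simpa only [Equiv.trans_apply, pairSlots_zero, pairSlots_one] using
      prod_bilin_mem_invariantTensors hAB ((pairSlots n).trans σ)
  convert Submodule.smul_mem _ r (Submodule.sum_mem _ fun σ (_ : σ ∈ univ) => pairing_mem σ)
  simp only [Pi.smul_apply, Finset.sum_apply, smul_eq_mul]

/-- For every `n ≥ 1`, the fully symmetrized product of Kronecker deltas of rank `2n`
is an invariant tensor of `sl(2,ℂ)`. -/
theorem stmt_5 (n : ℕ) (hn : 1 ≤ n) (c : Fin 3) (ι : Fin (2 * n) → Fin 3) :
    ∑ j : Fin (2 * n), ∑ b : Fin 3,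
      fconst c (ι j) b * symdelta n (Function.update ι j b) = 0 :=
  have h := stmt_5_general (fconst_mul_kdelta_add_kdelta_mul_transpose c) _ n
  congrFun (LinearMap.mem_ker.1 h) ι
end

section
/- Every invariant tensor of rank 2 on sl(2,ℂ) is a scalar multiple of the Kronecker delta: if t : Fin 3 → Fin 3 → ℂ satisfies Σ_{b ∈ Fin 3} ( f(c, a₁, b)·t(b, a₂) + f(c, a₂, b)·t(a₁, b) ) = 0 for all c, a₁, a₂ ∈ Fin 3, then there exists λ ∈ ℂ with t(a₁, a₂) = λ·δ(a₁, a₂) for all a₁, a₂. -/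
/-!
Since `ε(c, a, b)` is the `b`-th coordinate of `e_c ⨯₃ e_a`, an invariant tensor of rank 2 is a
bilinear map `B` for which every `v ⨯₃ ·` is skew-adjoint. Moving two such operators across `B`
gives `B (u ⨯₃ (v ⨯₃ x)) y = B x (v ⨯₃ (u ⨯₃ y))`. When both triple products are expanded, the terms
`(u ⬝ᵥ v) • B x y` cancel and `(u ⬝ᵥ x) • B v y = (v ⬝ᵥ y) • B x u` remains; taking `u = x = e₀`
exhibits `B` as a multiple of the dot product.
-/

open Matrix

section CrossInvariant

variable {R M : Type*} [CommRing R] [AddCommGroup M] [Module R M]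
  {B : (Fin 3 → R) →ₗ[R] (Fin 3 → R) →ₗ[R] M}

/-- A bilinear map on `R³` is invariant under the Lie algebra `(R³, ⨯₃)` acting on itself by the
adjoint representation and trivially on the target. -/
def IsCrossInvariant (B : (Fin 3 → R) →ₗ[R] (Fin 3 → R) →ₗ[R] M) : Prop :=
  ∀ v x y, B (v ⨯₃ x) y + B x (v ⨯₃ y) = 0

theorem isCrossInvariant_of_single
    (hB : ∀ c i j : Fin 3,
      B (Pi.single c 1 ⨯₃ Pi.single i 1) (Pi.single j 1) +
        B (Pi.single i 1) (Pi.single c 1 ⨯₃ Pi.single j 1) = 0) :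
    IsCrossInvariant B := by
  have extend_left (v : Fin 3 → R) (i j : Fin 3) :
      B (v ⨯₃ Pi.single i 1) (Pi.single j 1) + B (Pi.single i 1) (v ⨯₃ Pi.single j 1) = 0 := by
    have h : B.flip (Pi.single j 1) ∘ₗ crossProduct.flip (Pi.single i 1) +
        B (Pi.single i 1) ∘ₗ crossProduct.flip (Pi.single j 1) = 0 := by
      ext c
      simpa using hB c i j
    exact LinearMap.congr_fun h v
  intro v x y
  have h : B ∘ₗ crossProduct v + B.compl₂ (crossProduct v) = 0 := by
    ext i j
    simpa using extend_left v i j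
  exact LinearMap.congr_fun₂ h x y

namespace IsCrossInvariant

theorem apply_cross_left (hB : IsCrossInvariant B) (v x y : Fin 3 → R) :
    B (v ⨯₃ x) y = -B x (v ⨯₃ y) :=
  eq_neg_of_add_eq_zero_left (hB v x y)

theorem dotProduct_smul_apply_comm (hB : IsCrossInvariant B) (u v x y : Fin 3 → R) :
    (u ⬝ᵥ x) • B v y = (v ⬝ᵥ y) • B x u := by
  have h : B (u ⨯₃ (v ⨯₃ x)) y = B x (v ⨯₃ (u ⨯₃ y)) := by
    rw [hB.apply_cross_left, hB.apply_cross_left, neg_neg]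
  simpa only [cross_cross_eq_smul_sub_smul', map_sub, map_smul, LinearMap.sub_apply,
    LinearMap.smul_apply, dotProduct_comm v u, sub_left_inj] using h

theorem apply_eq_dotProduct_smul (hB : IsCrossInvariant B) (v y : Fin 3 → R) :
    B v y = (v ⬝ᵥ y) • B (Pi.single 0 1) (Pi.single 0 1) := by
  simpa using hB.dotProduct_smul_apply_comm (Pi.single 0 1) v (Pi.single 0 1) y

end IsCrossInvariant

end CrossInvariant

section ToBilin

variable {R n : Type*} [CommSemiring R] [Fintype n] [DecidableEq n]

theorem toBilin'_apply_single (t : Matrix n n R) (v : n → R) (j : n) :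
    toBilin' t v (Pi.single j 1) = ∑ i, v i * t i j := by
  simp [toBilin'_apply', dotProduct]

theorem toBilin'_single_apply (t : Matrix n n R) (i : n) (w : n → R) :
    toBilin' t (Pi.single i 1) w = ∑ j, w j * t i j := by
  rw [toBilin'_apply', single_one_dotProduct]
  simp [mulVec, dotProduct, mul_comm]

end ToBilin

theorem stmt_7_general {R : Type*} [CommRing R] {k : R} (hk : IsLeftRegular k)
    (t : Fin 3 → Fin 3 → R)
    (hinv : ∀ c a₁ a₂ : Fin 3,
      ∑ b : Fin 3, (k * (Pi.single c 1 ⨯₃ Pi.single a₁ 1 : Fin 3 → R) b * t b a₂ +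
        k * (Pi.single c 1 ⨯₃ Pi.single a₂ 1 : Fin 3 → R) b * t a₁ b) = 0) :
    ∃ lam : R, ∀ a₁ a₂ : Fin 3, t a₁ a₂ = lam * if a₁ = a₂ then 1 else 0 := by
  have hB : IsCrossInvariant (toBilin' (of t)) := by
    refine isCrossInvariant_of_single fun c i j ↦ hk.mul_left_eq_zero_iff.mp ?_
    simpa only [toBilin'_apply_single, toBilin'_single_apply, of_apply,
      ← Finset.sum_add_distrib, Finset.mul_sum, mul_add, ← mul_assoc] using hinv c i j
  refine ⟨t 0 0, fun a₁ a₂ ↦ ?_⟩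
  simpa [toBilin'_single, Pi.single_apply, eq_comm] using
    hB.apply_eq_dotProduct_smul (Pi.single a₁ 1) (Pi.single a₂ 1)

theorem lev_eq_cross_single (a b c : Fin 3) :
    lev a b c = (Pi.single a 1 ⨯₃ Pi.single b 1 : Fin 3 → ℂ) c := by
  fin_cases a <;> fin_cases b <;> fin_cases c <;> simp [lev, cross_apply]

/-- Every invariant tensor of rank 2 on `sl(2,ℂ)` is a scalar multiple of the Kronecker
delta. -/
theorem stmt_7 (t : Fin 3 → Fin 3 → ℂ)
    (hinv : ∀ c a₁ a₂ : Fin 3,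
      ∑ b : Fin 3, (fconst c a₁ b * t b a₂ + fconst c a₂ b * t a₁ b) = 0) :
    ∃ lam : ℂ, ∀ a₁ a₂ : Fin 3, t a₁ a₂ = lam * kdelta a₁ a₂ := by
  have hk : Complex.I * (Real.sqrt 2 : ℂ) ≠ 0 := by simp
  exact stmt_7_general (IsRegular.of_ne_zero hk).left t
    (by simpa only [fconst, lev_eq_cross_single] using hinv)
end

section
/- Every invariant tensor of rank 3 on sl(2,ℂ) is a scalar multiple of the Levi-Civita symbol: if t : Fin 3 → Fin 3 → Fin 3 → ℂ satisfies Σ_{b ∈ Fin 3} ( f(c, a₁, b)·t(b, a₂, a₃) + f(c, a₂, b)·t(a₁, b, a₃) + f(c, a₃, b)·t(a₁, a₂, b) ) = 0 for all c, a₁, a₂, a₃ ∈ Fin 3, then there exists λ ∈ ℂ with t(a₁, a₂, a₃) = λ·ε(a₁, a₂, a₃) for all a₁, a₂, a₃. -/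
/-!
Write `D_c` for the action of the `c`-th basis vector. When `ε c a b ≠ 0`, `D_c` sends the index `a`
to `± b` and kills the index `c`, so a single invariance equation has very few terms:

* `D_c` at `(c, c, a)` gives `t c c b = 0`, and cyclically for the other two positions;
* `D_c` at `(a, a, b)` then leaves only `t a a a`, which must vanish;
* `D_c` at `(a, a, c)` gives `t b a c + t a b c = 0`.

Hence `t` is alternating, so it is determined by `t 0 1 2`. The only scalars divided by are the
signs `ε c a b = ± 1` and the normalization of the structure constants.
-/

/-- The integer-valued Levi-Civita symbol on three indices, used for tensors with entries in an
arbitrary abelian group. Addition in `Fin 3` is cyclic, so `ε(a,b,c) = 1` exactly for the rotations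
of `(0,1,2)` and `ε(a,b,c) = -1` exactly for those of `(2,1,0)`. -/
def leviCivita (a b c : Fin 3) : ℤ :=
  if b = a + 1 ∧ c = b + 1 then 1 else if b = c + 1 ∧ a = b + 1 then -1 else 0

local notation "ε" => leviCivita

theorem lev_eq_intCast (a b c : Fin 3) : lev a b c = (ε a b c : ℂ) := by
  fin_cases a <;> fin_cases b <;> fin_cases c <;> simp [lev, leviCivita]

theorem leviCivita_eq_zero_or_one_or_neg_one :
    ∀ a b c : Fin 3, ε a b c = 0 ∨ ε a b c = 1 ∨ ε a b c = -1 := by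
  decide

theorem isUnit_leviCivita {a b c : Fin 3} (h : ε a b c ≠ 0) : IsUnit (ε a b c) :=
  Int.isUnit_iff.mpr <| (leviCivita_eq_zero_or_one_or_neg_one a b c).resolve_left h

theorem leviCivita_self_left : ∀ a b : Fin 3, ε a a b = 0 := by
  decide

theorem leviCivita_swap_left : ∀ a b c : Fin 3, ε b a c = -ε a b c := by
  decide

theorem leviCivita_swap_right : ∀ a b c : Fin 3, ε a c b = -ε a b c := by
  decide

theorem leviCivita_rotate : ∀ a b c : Fin 3, ε b c a = ε a b c := by
  decide

theorem exists_leviCivita_ne_zero : ∀ {a b : Fin 3}, a ≠ b → ∃ c, ε c a b ≠ 0 := by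
  decide

theorem exists_eq_of_leviCivita_eq_zero :
    ∀ {a b c : Fin 3}, ε a b c = 0 → a = b ∨ b = c ∨ c = a := by
  decide

theorem eq_rotation_of_leviCivita_eq_one : ∀ {a b c : Fin 3}, ε a b c = 1 →
    (a = 0 ∧ b = 1 ∧ c = 2) ∨ (a = 1 ∧ b = 2 ∧ c = 0) ∨ (a = 2 ∧ b = 0 ∧ c = 1) := by
  decide

theorem leviCivita_eq_zero_of_ne :
    ∀ {a b c : Fin 3}, ε a b c ≠ 0 → ∀ d ≠ c, ε a b d = 0 := by
  decide

section Invariant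

variable {M : Type*} [AddCommGroup M]

theorem sum_leviCivita_self_smul (c : Fin 3) (v : Fin 3 → M) : ∑ b, ε c c b • v b = 0 := by
  simp only [leviCivita_self_left, zero_smul, Finset.sum_const_zero]

theorem sum_leviCivita_smul {a b c : Fin 3} (h : ε c a b ≠ 0) (v : Fin 3 → M) :
    ∑ d, ε c a d • v d = ε c a b • v b :=
  Fintype.sum_eq_single b fun d hd => by rw [leviCivita_eq_zero_of_ne h d hd, zero_smul]

/-- Invariance of a rank 3 tensor with entries in an abelian group, under the Lie algebra with
structure constants `ε`. A nonzero scalar factor of the structure constants is left out, and the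
sums for the three slots are kept apart. -/
def IsInvariantTensor (t : Fin 3 → Fin 3 → Fin 3 → M) : Prop :=
  ∀ c a₁ a₂ a₃, ∑ b, ε c a₁ b • t b a₂ a₃ + ∑ b, ε c a₂ b • t a₁ b a₃
    + ∑ b, ε c a₃ b • t a₁ a₂ b = 0

theorem isInvariantTensor_of_smul {R : Type*} [Ring R] [Module R M] {κ : R} (hκ : IsSMulRegular M κ)
    {t : Fin 3 → Fin 3 → Fin 3 → M}
    (hinv : ∀ c a₁ a₂ a₃, ∑ b, ((κ * ε c a₁ b) • t b a₂ a₃ + (κ * ε c a₂ b) • t a₁ b a₃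
      + (κ * ε c a₃ b) • t a₁ a₂ b) = 0) :
    IsInvariantTensor t := fun c a₁ a₂ a₃ => hκ <| by
  simpa only [mul_smul, Int.cast_smul_eq_zsmul, Finset.sum_add_distrib, ← Finset.smul_sum,
    ← smul_add, smul_zero] using hinv c a₁ a₂ a₃

namespace IsInvariantTensor

variable {t : Fin 3 → Fin 3 → Fin 3 → M}

theorem rotate (ht : IsInvariantTensor t) :
    IsInvariantTensor fun a b c => t b c a := fun c a₁ a₂ a₃ => by
  rw [add_assoc, add_comm]
  exact ht c a₂ a₃ a₁

theorem apply_self_left_of_ne (ht : IsInvariantTensor t) {a b : Fin 3} (hab : a ≠ b) :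
    t a a b = 0 := by
  obtain ⟨c, hc⟩ := exists_leviCivita_ne_zero hab
  have hacb : ε a c b ≠ 0 := by rwa [leviCivita_swap_left, neg_ne_zero]
  have hD := ht a a a c
  rw [sum_leviCivita_self_smul, sum_leviCivita_self_smul, sum_leviCivita_smul hacb, zero_add,
    zero_add] at hD
  exact (isUnit_leviCivita hacb).smul_eq_zero.mp hD

theorem apply_diagonal (ht : IsInvariantTensor t) (a : Fin 3) : t a a a = 0 := by
  obtain ⟨b, hba⟩ := exists_ne a
  obtain ⟨c, hcba⟩ := exists_leviCivita_ne_zero hba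
  have hcab : ε c a b ≠ 0 := by rwa [leviCivita_swap_right, neg_ne_zero]
  have hbab : t b a b = 0 := ht.rotate.apply_self_left_of_ne hba
  have habb : t a b b = 0 := ht.rotate.rotate.apply_self_left_of_ne hba
  have hD := ht c a a b
  rw [sum_leviCivita_smul hcab, sum_leviCivita_smul hcab, sum_leviCivita_smul hcba, hbab, habb,
    smul_zero, zero_add, zero_add] at hD
  exact (isUnit_leviCivita hcba).smul_eq_zero.mp hD

theorem apply_self_left (ht : IsInvariantTensor t) (a b : Fin 3) : t a a b = 0 := by
  obtain rfl | hab := eq_or_ne a b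
  · exact ht.apply_diagonal a
  · exact ht.apply_self_left_of_ne hab

theorem apply_eq_zero_of_leviCivita (ht : IsInvariantTensor t) {a b c : Fin 3}
    (h : ε a b c = 0) : t a b c = 0 := by
  obtain rfl | rfl | rfl := exists_eq_of_leviCivita_eq_zero h
  · exact ht.apply_self_left a c
  · exact ht.rotate.rotate.apply_self_left b a
  · exact ht.rotate.apply_self_left c b

theorem apply_swap_left (ht : IsInvariantTensor t) (a b c : Fin 3) : t b a c = -t a b c := by
  by_cases h : ε a b c = 0
  · have hswap : ε b a c = 0 := by rw [leviCivita_swap_left, h, neg_zero]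
    rw [ht.apply_eq_zero_of_leviCivita h, ht.apply_eq_zero_of_leviCivita hswap, neg_zero]
  · have hcab : ε c a b ≠ 0 := by rwa [← leviCivita_rotate]
    have hD := ht c a a c
    rw [sum_leviCivita_smul hcab, sum_leviCivita_smul hcab, sum_leviCivita_self_smul, add_zero,
      ← smul_add] at hD
    exact eq_neg_of_add_eq_zero_left ((isUnit_leviCivita hcab).smul_eq_zero.mp hD)

theorem apply_rotate (ht : IsInvariantTensor t) (a b c : Fin 3) : t b c a = t a b c := by
  have hswap_right : t b a c = -t b c a := ht.rotate.rotate.apply_swap_left c a b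
  rw [← neg_inj, ← hswap_right, ht.apply_swap_left]

theorem apply_eq_of_leviCivita_eq_one (ht : IsInvariantTensor t) {a b c : Fin 3} (h : ε a b c = 1) :
    t a b c = t 0 1 2 := by
  obtain ⟨rfl, rfl, rfl⟩ | ⟨rfl, rfl, rfl⟩ | ⟨rfl, rfl, rfl⟩ := eq_rotation_of_leviCivita_eq_one h
  · rfl
  · exact ht.apply_rotate 0 1 2
  · exact (ht.apply_rotate 2 0 1).symm

theorem eq_leviCivita_smul (ht : IsInvariantTensor t) (a b c : Fin 3) :
    t a b c = ε a b c • t 0 1 2 := by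
  obtain h | h | h := leviCivita_eq_zero_or_one_or_neg_one a b c
  · rw [h, zero_smul, ht.apply_eq_zero_of_leviCivita h]
  · rw [h, one_smul, ht.apply_eq_of_leviCivita_eq_one h]
  · have hswap : ε b a c = 1 := by rw [leviCivita_swap_left, h, neg_neg]
    rw [h, neg_one_smul, ht.apply_swap_left b a c, ht.apply_eq_of_leviCivita_eq_one hswap]

end IsInvariantTensor

end Invariant

theorem stmt_8_general {R M : Type*} [Ring R] [AddCommGroup M] [Module R M] {κ : R}
    (hκ : IsSMulRegular M κ) (t : Fin 3 → Fin 3 → Fin 3 → M)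
    (hinv : ∀ c a₁ a₂ a₃, ∑ b, ((κ * ε c a₁ b) • t b a₂ a₃ + (κ * ε c a₂ b) • t a₁ b a₃
      + (κ * ε c a₃ b) • t a₁ a₂ b) = 0) :
    ∃ m : M, ∀ a₁ a₂ a₃, t a₁ a₂ a₃ = ε a₁ a₂ a₃ • m :=
  ⟨t 0 1 2, (isInvariantTensor_of_smul hκ hinv).eq_leviCivita_smul⟩

/-- Every invariant tensor of rank 3 on `sl(2,ℂ)` is a scalar multiple of the Levi-Civita
symbol. -/
theorem stmt_8 (t : Fin 3 → Fin 3 → Fin 3 → ℂ)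
    (hinv : ∀ c a₁ a₂ a₃ : Fin 3,
      ∑ b : Fin 3, (fconst c a₁ b * t b a₂ a₃ + fconst c a₂ b * t a₁ b a₃
        + fconst c a₃ b * t a₁ a₂ b) = 0) :
    ∃ lam : ℂ, ∀ a₁ a₂ a₃ : Fin 3, t a₁ a₂ a₃ = lam * lev a₁ a₂ a₃ := by
  have hκ : Complex.I * (Real.sqrt 2 : ℂ) ≠ 0 := by simp
  simp only [fconst, lev_eq_intCast] at hinv
  obtain ⟨lam, ht⟩ := stmt_8_general (IsSMulRegular.of_ne_zero hκ) t hinv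
  exact ⟨lam, by simpa only [lev_eq_intCast, mul_comm, zsmul_eq_mul] using ht⟩
end

section
/- Nonzero totally symmetric invariant tensors of sl(2,ℂ) exist only in even rank: for every odd natural number n, if t : (Fin n → Fin 3) → ℂ is totally symmetric (t(ι ∘ σ) = t(ι) for all permutations σ of Fin n) and invariant, then t = 0. -/
/-!
In a basis index alphabet `α`, the rotation generator of the `(x, y)`-plane sends an index `x` to
`y` and an index `y` to `-x`. A symmetric tensor depends only on how often each index occurs, so
for it invariance under this generator relates the entries in which `x` occurs `k + 1` times to
those in which it occurs `k - 1` times. For `k = 0` the second kind is absent, so entries with a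
single `x` vanish, and hence so do all entries in which `x` occurs an odd number of times. In odd
rank, every entry has an index occurring an odd number of times.

For `sl(2, ℂ)`, contracting the invariance condition with `ε(c, y, x)` over `c` yields invariance
under the generator of the `(x, y)`-plane.
-/

open Finset Function

theorem exists_odd_card_fiber {ι α : Type*} [Fintype ι] [DecidableEq α]
    (hι : Odd (Fintype.card ι)) (κ : ι → α) :
    ∃ x, Odd #{j | κ j = x} := by
  by_contra! h
  refine Nat.not_even_iff_odd.mpr hι ?_
  rw [← card_univ, card_eq_sum_card_image κ]
  exact even_sum _ fun x _ => Nat.not_odd_iff_even.mp (h x)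

section RotationInvariant

variable {ι α M : Type*} [DecidableEq ι]

/-- A tensor, given by its entries in a basis indexed by `α` and with tensor slots `ι`, is
symmetric if permuting the slots does not change its entries. -/
def IsSymmetricTensor (t : (ι → α) → M) : Prop :=
  ∀ (σ : Equiv.Perm ι) (κ : ι → α), t (κ ∘ σ) = t κ

/-- Invariance of a tensor under all infinitesimal rotations of coordinate planes, i.e. under
`𝔰𝔬(α)`: the derivation induced by the generator `E_xy - E_yx` kills `t`. The two halves of the
derivation are put on opposite sides, so that entries in a commutative monoid are allowed. -/
def IsRotationInvariant [Fintype ι] [DecidableEq α] [AddCommMonoid M] (t : (ι → α) → M) : Prop :=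
  ∀ (x y : α) (κ : ι → α),
    ∑ j with κ j = y, t (update κ j x) = ∑ j with κ j = x, t (update κ j y)

theorem update_comp_swap_of_apply_eq {κ : ι → α} {i j : ι} (h : κ i = κ j) (a : α) :
    update κ i a ∘ Equiv.swap i j = update κ j a := by
  have swap_invariant : κ ∘ Equiv.swap i j = κ := by
    rw [Equiv.comp_swap_eq_update, h, update_eq_self, ← h, update_eq_self]
  rw [update_comp_equiv, swap_invariant, Equiv.symm_swap, Equiv.swap_apply_left]

theorem IsSymmetricTensor.update_eq_update {t : (ι → α) → M} (ht : IsSymmetricTensor t)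
    {κ : ι → α} {i j : ι} (h : κ i = κ j) (a : α) :
    t (update κ i a) = t (update κ j a) := by
  rw [← update_comp_swap_of_apply_eq h, ht]

variable [Fintype ι] [DecidableEq α]

theorem card_filter_update_add_one {κ : ι → α} {i : ι} {x y : α} (hi : κ i = x) (hxy : x ≠ y) :
    #{j | update κ i y j = x} + 1 = #{j | κ j = x} := by
  have filter_eq : ({j | update κ i y j = x} : Finset ι) = ({j | κ j = x} : Finset ι).erase i := by
    ext j
    by_cases h : j = i <;> simp [h, hxy.symm]
  rw [filter_eq, card_erase_add_one (by simpa using hi)]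

variable [AddCommMonoid M] {t : (ι → α) → M}

theorem IsSymmetricTensor.sum_update_eq_card_nsmul (ht : IsSymmetricTensor t) {κ : ι → α} {i : ι}
    {y : α} (hi : κ i = y) (x : α) :
    ∑ j with κ j = y, t (update κ j x) = #{j | κ j = y} • t (update κ i x) :=
  sum_eq_card_nsmul fun j hj =>
    ht.update_eq_update (((mem_filter_univ j).mp hj).trans hi.symm) x

variable [IsAddTorsionFree M]

theorem IsSymmetricTensor.apply_eq_zero_of_odd_card (ht : IsSymmetricTensor t)
    (hrot : IsRotationInvariant t) {x y : α} (hxy : x ≠ y) {κ : ι → α}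
    (hκ : Odd #{j | κ j = x}) : t κ = 0 := by
  induction hk : #{j | κ j = x} using Nat.strong_induction_on generalizing κ with
  | _ k ih =>
  obtain ⟨i, hi⟩ := card_pos.mp hκ.pos
  replace hi : κ i = x := (mem_filter_univ i).mp hi
  set μ := update κ i y with hμ
  have hμi : μ i = y := update_self ..
  have hμκ : update μ i x = κ := by rw [hμ, update_idem, ← hi, update_eq_self]
  have card_μ : #{j | μ j = x} + 1 = #{j | κ j = x} := card_filter_update_add_one hi hxy
  have two_fewer : ∑ j with μ j = x, t (update μ j y) = 0 := by
    refine sum_eq_zero fun j hj => ?_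
    have card_update : #{l | update μ j y l = x} + 1 = #{l | μ l = x} :=
      card_filter_update_add_one ((mem_filter_univ j).mp hj) hxy
    exact ih _ (by lia) (by grind) rfl
  have nsmul_eq_zero : #{j | μ j = y} • t κ = 0 := by
    rw [← two_fewer, ← hrot x y μ, ht.sum_update_eq_card_nsmul hμi, hμκ]
  have card_ne_zero : #{j | μ j = y} ≠ 0 := card_ne_zero_of_mem ((mem_filter_univ i).mpr hμi)
  exact (nsmul_eq_zero_iff_right card_ne_zero).mp nsmul_eq_zero

theorem stmt_9_general [Nontrivial α] (hι : Odd (Fintype.card ι)) (ht : IsSymmetricTensor t)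
    (hrot : IsRotationInvariant t) : t = 0 := by
  funext κ
  obtain ⟨x, hx⟩ := exists_odd_card_fiber hι κ
  obtain ⟨y, hyx⟩ := exists_ne x
  exact ht.apply_eq_zero_of_odd_card hrot hyx.symm hx

end RotationInvariant

theorem sum_lev_mul_lev (x y a b : Fin 3) :
    ∑ c, lev c x y * lev c a b = kdelta x a * kdelta y b - kdelta x b * kdelta y a := by
  fin_cases x <;> fin_cases y <;> fin_cases a <;> fin_cases b <;>
    simp [lev, kdelta]

theorem isRotationInvariant_of_sum_fconst_eq_zero {ι : Type*} [Fintype ι] [DecidableEq ι]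
    {t : (ι → Fin 3) → ℂ}
    (hinv : ∀ (c : Fin 3) (κ : ι → Fin 3),
      ∑ j, ∑ b, fconst c (κ j) b * t (update κ j b) = 0) :
    IsRotationInvariant t := by
  intro x y κ
  have lev_invariant (c : Fin 3) : ∑ j, ∑ b, lev c (κ j) b * t (update κ j b) = 0 := by
    have h := hinv c κ
    simp only [fconst, mul_assoc, ← mul_sum] at h
    simpa using h
  refine sub_eq_zero.mp ?_
  calc
    ∑ j with κ j = y, t (update κ j x) - ∑ j with κ j = x, t (update κ j y)
      = ∑ j, ∑ b, (kdelta y (κ j) * kdelta x b - kdelta y b * kdelta x (κ j)) *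
          t (update κ j b) := by
      simp [kdelta, sub_mul, sum_filter, eq_comm]
    _ = ∑ j, ∑ b, ∑ c, lev c y x * (lev c (κ j) b * t (update κ j b)) := by
      simp only [← sum_lev_mul_lev, sum_mul, mul_assoc]
    _ = ∑ c, lev c y x * ∑ j, ∑ b, lev c (κ j) b * t (update κ j b) := by
      simp only [mul_sum]
      rw [sum_comm_cycle]
    _ = 0 := by simp only [lev_invariant, mul_zero, sum_const_zero]

/-- Nonzero totally symmetric invariant tensors of `sl(2,ℂ)` exist only in even rank:
every totally symmetric invariant tensor of odd rank vanishes. -/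
theorem stmt_9 (n : ℕ) (hn : Odd n) (t : (Fin n → Fin 3) → ℂ)
    (hsym : ∀ (σ : Equiv.Perm (Fin n)) (ι : Fin n → Fin 3), t (ι ∘ σ) = t ι)
    (hinv : ∀ (c : Fin 3) (ι : Fin n → Fin 3),
      ∑ j : Fin n, ∑ b : Fin 3, fconst c (ι j) b * t (Function.update ι j b) = 0) :
    t = 0 :=
  stmt_9_general (by simpa using hn) hsym (isRotationInvariant_of_sum_fconst_eq_zero hinv)
end

section
/- For every n ≥ 1, every totally symmetric invariant tensor of rank 2n on sl(2,ℂ) is a scalar multiple of the fully symmetrized product of Kronecker deltas: if t : (Fin 2n → Fin 3) → ℂ is totally symmetric and invariant, then there exists λ ∈ ℂ such that t(ι) = λ · (1/(2n)!) · Σ_{σ ∈ Perm(Fin 2n)} Π_{j=0}^{n−1} δ(ι(σ(2j)), ι(σ(2j+1))) for all ι : Fin 2n → Fin 3. -/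
/-!
On the adjoint representation `ℂ³`, `sl(2,ℂ)` acts as the algebra `so(3)` of skew matrices. The
argument works for `so(κ)` with any finite `κ`. Fix a value `o`. Invariance of `t` under the
rotation generator `E_{ov} - E_{vo}` says that turning one `o` of a multi-index into `v`, summed
over all places, equals turning one `v` into `o`. For symmetric `t` all terms of the first sum
agree, so `t` at a multi-index with an entry `v ≠ o` is determined by multi-indices with fewer
entries different from `o`; hence `t` is determined by `t(o, …, o)`. The symmetrized product of
deltas is symmetric, invariant, and takes the value `1` there.
-/

section TensorDeriv

variable {ι ι' α β κ R : Type*} [Fintype ι] [DecidableEq ι] [Fintype ι'] [DecidableEq ι']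
  [Fintype α] [DecidableEq α] [Fintype β] [DecidableEq β] [Fintype κ] [CommSemiring R]

/-- The action of a matrix `A` on tensors with index places `ι`, by derivations: the sum over all
places of `A` contracted with that place. -/
def tensorDeriv : Matrix κ κ R →ₗ[R] ((ι → κ) → R) →ₗ[R] ((ι → κ) → R) :=
  LinearMap.mk₂ R (fun A t x => ∑ j, ∑ b, A (x j) b * t (Function.update x j b))
    (fun A B t => by ext x; simp [add_mul, Finset.sum_add_distrib])
    (fun r A t => by ext x; simp [mul_assoc, Finset.mul_sum])
    (fun A t u => by ext x; simp [mul_add, Finset.sum_add_distrib])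
    (fun r A t => by ext x; simp [mul_left_comm, Finset.mul_sum])

lemma tensorDeriv_apply (A : Matrix κ κ R) (t : (ι → κ) → R) (x : ι → κ) :
    tensorDeriv A t x = ∑ j, ∑ b, A (x j) b * t (Function.update x j b) :=
  rfl

lemma tensorDeriv_comp_equiv (A : Matrix κ κ R) (e : ι' ≃ ι) (t : (ι' → κ) → R) :
    tensorDeriv A (fun x : ι → κ => t (x ∘ e)) = fun x => tensorDeriv A t (x ∘ e) := by
  ext x
  simp only [tensorDeriv_apply, Function.update_comp_equiv]
  rw [← e.sum_comp]
  simp only [Equiv.symm_apply_apply, Function.comp_apply]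

lemma tensorDeriv_prod (A : Matrix κ κ R) (s : α → (β → κ) → R) (x : α × β → κ) :
    tensorDeriv A (fun y => ∏ k, s k (Function.curry y k)) x =
      ∑ k, tensorDeriv A (s k) (Function.curry x k) *
        ∏ l ∈ Finset.univ.erase k, s l (Function.curry x l) := by
  have prod_update (k : α) (i : β) (b : κ) :
      ∏ l, s l (Function.curry (Function.update x (k, i) b) l) =
        s k (Function.update (Function.curry x k) i b) *
          ∏ l ∈ Finset.univ.erase k, s l (Function.curry x l) := by
    rw [← Finset.mul_prod_erase _ _ (Finset.mem_univ k), Function.curry_update,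
      Function.update_self]
    congr 1
    exact Finset.prod_congr rfl fun l hl => by
      rw [Function.update_of_ne (Finset.ne_of_mem_erase hl)]
  simp only [tensorDeriv_apply, Fintype.sum_prod_type, prod_update, Finset.sum_mul, mul_assoc,
    Function.curry_apply]

lemma tensorDeriv_single [DecidableEq κ] (a b : κ) (t : (ι → κ) → R) (x : ι → κ) :
    tensorDeriv (Matrix.single a b 1) t x = ∑ j with x j = a, t (Function.update x j b) := by
  simp [tensorDeriv_apply, Matrix.single_apply, ite_and, Finset.sum_filter, eq_comm]

end TensorDeriv

section Delta

variable {ι α κ R : Type*} [Fintype α] [DecidableEq κ]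

/-- The product of Kronecker deltas that contracts the index places along a pairing `e` of them:
the places `e (k, 0)` and `e (k, 1)` are partners. -/
def pairedDelta (R : Type*) [CommMonoidWithZero R] (e : α × Fin 2 ≃ ι) (x : ι → κ) : R :=
  ∏ k, if x (e (k, 0)) = x (e (k, 1)) then 1 else 0

lemma pairedDelta_const [CommMonoidWithZero R] (e : α × Fin 2 ≃ ι) (o : κ) :
    pairedDelta R e (fun _ => o) = 1 := by
  simp [pairedDelta]

variable [Fintype κ] [CommRing R] {A : Matrix κ κ R}

lemma apply_swap_of_mem_so (hA : A ∈ LieAlgebra.Orthogonal.so κ R) (a b : κ) :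
    A b a = -A a b :=
  congrFun₂ ((LieAlgebra.Orthogonal.mem_so _ _ _).1 hA) a b

lemma tensorDeriv_delta (hA : A ∈ LieAlgebra.Orthogonal.so κ R) :
    tensorDeriv A (fun x : Fin 2 → κ => if x 0 = x 1 then 1 else 0) = 0 := by
  ext x
  simp [tensorDeriv_apply, Fin.sum_univ_two, apply_swap_of_mem_so hA (x 0)]

lemma tensorDeriv_pairedDelta [Fintype ι] [DecidableEq ι]
    (hA : A ∈ LieAlgebra.Orthogonal.so κ R) (e : α × Fin 2 ≃ ι) :
    tensorDeriv A (pairedDelta R e) = 0 := by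
  classical
  let δ : (Fin 2 → κ) → R := fun y => if y 0 = y 1 then 1 else 0
  have prod_delta : tensorDeriv A (fun x : α × Fin 2 → κ => ∏ k, δ (Function.curry x k)) = 0 := by
    ext x
    rw [tensorDeriv_prod A fun _ => δ]
    simp only [δ, tensorDeriv_delta hA, Pi.zero_apply, zero_mul, Finset.sum_const_zero]
  exact (tensorDeriv_comp_equiv A e _).trans (funext fun x => congrFun prod_delta (x ∘ e))

end Delta

section Symmetrize

variable {ι κ K : Type*} [Fintype ι] [DecidableEq ι] [Field K]

/-- The average of a tensor over all permutations of its index places, which is `0` when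
the factorial of the number of places vanishes in `K`. -/
def symmetrize (t : (ι → κ) → K) : (ι → κ) → K :=
  ((Fintype.card ι).factorial : K)⁻¹ • ∑ σ : Equiv.Perm ι, fun x => t (x ∘ σ)

lemma symmetrize_apply (t : (ι → κ) → K) (x : ι → κ) :
    symmetrize t x = ((Fintype.card ι).factorial : K)⁻¹ * ∑ σ : Equiv.Perm ι, t (x ∘ σ) := by
  simp [symmetrize]

lemma symmetrize_comp_perm (t : (ι → κ) → K) (τ : Equiv.Perm ι) (x : ι → κ) :
    symmetrize t (x ∘ τ) = symmetrize t x := by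
  simp only [symmetrize_apply]
  congr 1
  exact Equiv.sum_comp (Equiv.mulLeft τ) fun σ : Equiv.Perm ι => t (x ∘ σ)

lemma symmetrize_const [CharZero K] (t : (ι → κ) → K) (o : κ) :
    symmetrize t (fun _ => o) = t fun _ => o := by
  have factorial_ne_zero : ((Fintype.card ι).factorial : K) ≠ 0 :=
    Nat.cast_ne_zero.2 (Nat.factorial_ne_zero _)
  simp [symmetrize_apply, Function.comp_def, Fintype.card_perm, factorial_ne_zero]

lemma tensorDeriv_symmetrize [Fintype κ] (A : Matrix κ κ K) (t : (ι → κ) → K) :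
    tensorDeriv A (symmetrize t) = symmetrize (tensorDeriv A t) := by
  simp only [symmetrize, map_smul, map_sum, tensorDeriv_comp_equiv]

end Symmetrize

section Uniqueness

variable {ι κ R : Type*} [DecidableEq ι] {t : (ι → κ) → R}

lemma apply_update_eq_of_symmetric (hsym : ∀ (σ : Equiv.Perm ι) x, t (x ∘ σ) = t x)
    {x : ι → κ} {i j : ι} (hij : x i = x j) (v : κ) :
    t (Function.update x i v) = t (Function.update x j v) := by
  have swap_invariant : x ∘ Equiv.swap i j = x := by
    ext l
    simp only [Function.comp_apply, Equiv.swap_apply_def]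
    split_ifs <;> simp_all
  rw [← hsym (Equiv.swap i j), Function.update_comp_equiv, swap_invariant, Equiv.symm_swap,
    Equiv.swap_apply_left]

variable [Fintype ι] [Fintype κ] [DecidableEq κ] [CommRing R]

lemma sum_update_comm_of_orthogonal_invariant
    (hinv : ∀ A ∈ LieAlgebra.Orthogonal.so κ R, tensorDeriv A t = 0) (a b : κ) (x : ι → κ) :
    ∑ j with x j = a, t (Function.update x j b) = ∑ j with x j = b, t (Function.update x j a) := by
  have rotation_mem : Matrix.single a b 1 - Matrix.single b a 1 ∈ LieAlgebra.Orthogonal.so κ R := by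
    simp [LieAlgebra.Orthogonal.mem_so]
  have h := congrFun (hinv _ rotation_mem) x
  simpa [tensorDeriv_single, sub_eq_zero] using h

lemma eq_zero_of_symmetric_of_orthogonal_invariant [IsAddTorsionFree R] {o : κ}
    (hsym : ∀ (σ : Equiv.Perm ι) x, t (x ∘ σ) = t x)
    (hinv : ∀ A ∈ LieAlgebra.Orthogonal.so κ R, tensorDeriv A t = 0)
    (ho : t (fun _ => o) = 0) : t = 0 := by
  ext x
  induction hS : ({j | x j ≠ o} : Finset ι) using Finset.strongInduction generalizing x with
  | H S ih =>
    subst hS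
    by_cases hx : ∀ j, x j = o
    · rwa [funext hx]
    obtain ⟨i, hi⟩ := not_forall.1 hx
    set y := Function.update x i o with hy
    have raise (j : ι) (hj : y j = o) : t (Function.update y j (x i)) = t x := by
      rw [apply_update_eq_of_symmetric hsym (hj.trans (Function.update_self i o x).symm)]
      simp [hy]
    have lower (j : ι) : t (Function.update y j o) = 0 := by
      refine ih _ ?_ _ rfl
      refine (Finset.ssubset_iff_of_subset fun l => ?_).2 ⟨i, by simpa using hi, ?_⟩
      · simp only [hy, Finset.mem_filter_univ, Function.update_apply]
        split_ifs <;> simp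
      · simp [hy, Function.update_apply]
    have card_smul : Finset.card {j | y j = o} • t x = 0 := calc
      _ = ∑ j with y j = o, t (Function.update y j (x i)) := by
        rw [Finset.sum_congr rfl fun j hj => raise j (Finset.mem_filter.1 hj).2,
          Finset.sum_const]
      _ = ∑ j with y j = x i, t (Function.update y j o) :=
        sum_update_comm_of_orthogonal_invariant hinv o (x i) y
      _ = 0 := Finset.sum_eq_zero fun j _ => lower j
    have card_ne_zero : Finset.card {j | y j = o} ≠ 0 :=
      Finset.card_ne_zero_of_mem (a := i) (by simp [hy])
    exact (nsmul_eq_zero_iff_right card_ne_zero).1 card_smul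

end Uniqueness

theorem stmt_10_general {ι α κ K : Type*} [Fintype ι] [DecidableEq ι] [Fintype α]
    [Fintype κ] [DecidableEq κ] [Field K] [CharZero K] (e : α × Fin 2 ≃ ι) (o : κ)
    {t : (ι → κ) → K} (hsym : ∀ (σ : Equiv.Perm ι) (x : ι → κ), t (x ∘ σ) = t x)
    (hinv : ∀ A ∈ LieAlgebra.Orthogonal.so κ K, tensorDeriv A t = 0) :
    t = t (fun _ => o) • symmetrize (pairedDelta K e) := by
  refine sub_eq_zero.1 (eq_zero_of_symmetric_of_orthogonal_invariant (o := o) ?_ ?_ ?_)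
  · intro σ x
    simp [hsym, symmetrize_comp_perm]
  · intro A hA
    have symmetrize_zero : symmetrize (0 : (ι → κ) → K) = 0 := by ext; simp [symmetrize_apply]
    simp [hinv A hA, tensorDeriv_symmetrize, tensorDeriv_pairedDelta hA, symmetrize_zero]
  · simp [symmetrize_const, pairedDelta_const]

section StructureConstants

lemma eq_sum_smul_lev_of_mem_so {A : Matrix (Fin 3) (Fin 3) ℂ}
    (hA : A ∈ LieAlgebra.Orthogonal.so (Fin 3) ℂ) :
    A = ∑ c, A (c + 1) (c + 2) • Matrix.of (lev c) := by
  have skew := apply_swap_of_mem_so hA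
  have diag (a : Fin 3) : A a a = 0 := self_eq_neg.1 (skew a a)
  ext a b
  fin_cases a <;> fin_cases b <;>
    simp [Fin.sum_univ_three, lev, diag, skew 0 1, skew 1 2, skew 2 0]

lemma mem_span_fconst_of_mem_so {A : Matrix (Fin 3) (Fin 3) ℂ}
    (hA : A ∈ LieAlgebra.Orthogonal.so (Fin 3) ℂ) :
    A ∈ Submodule.span ℂ (Set.range fun c => Matrix.of (fconst c)) := by
  have scale_ne_zero : Complex.I * (Real.sqrt 2 : ℂ) ≠ 0 := by simp
  have lev_eq (c : Fin 3) :
      Matrix.of (lev c) = (Complex.I * (Real.sqrt 2 : ℂ))⁻¹ • Matrix.of (fconst c) :=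
    (inv_smul_smul₀ scale_ne_zero _).symm
  rw [eq_sum_smul_lev_of_mem_so hA]
  refine Submodule.sum_mem _ fun c _ => Submodule.smul_mem _ _ ?_
  exact lev_eq c ▸ Submodule.smul_mem _ _ (Submodule.subset_span ⟨c, rfl⟩)

lemma tensorDeriv_eq_zero_of_fconst {ι : Type*} [Fintype ι] [DecidableEq ι]
    {t : (ι → Fin 3) → ℂ} (hinv : ∀ c, tensorDeriv (Matrix.of (fconst c)) t = 0)
    {A : Matrix (Fin 3) (Fin 3) ℂ} (hA : A ∈ LieAlgebra.Orthogonal.so (Fin 3) ℂ) :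
    tensorDeriv A t = 0 := by
  have span_le_ker : Submodule.span ℂ (Set.range fun c => Matrix.of (fconst c)) ≤
      LinearMap.ker (tensorDeriv.flip t) :=
    Submodule.span_le.2 (Set.range_subset_iff.2 hinv)
  exact span_le_ker (mem_span_fconst_of_mem_so hA)

/-- The pairing of the `2n` places of `symdelta n`: `(j, i)` corresponds to `2j + i`. -/
def consecutivePairing (n : ℕ) : Fin n × Fin 2 ≃ Fin (2 * n) :=
  finProdFinEquiv.trans (finCongr (mul_comm n 2))

lemma symdelta_eq_symmetrize (n : ℕ) :
    symdelta n = symmetrize (pairedDelta ℂ (consecutivePairing n)) := by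
  ext x
  have even_place (j : Fin n) : consecutivePairing n (j, 0) = ⟨2 * j, by omega⟩ := by
    ext; simp [consecutivePairing]
  have odd_place (j : Fin n) : consecutivePairing n (j, 1) = ⟨2 * j + 1, by omega⟩ := by
    ext; simp [consecutivePairing, add_comm]
  simp [symdelta, symmetrize_apply, pairedDelta, kdelta, even_place, odd_place]

end StructureConstants

/-- For `n ≥ 1`, every totally symmetric invariant tensor of rank `2n` on `sl(2,ℂ)` is a
scalar multiple of the fully symmetrized product of Kronecker deltas. -/
theorem stmt_10 (n : ℕ) (hn : 1 ≤ n) (t : (Fin (2 * n) → Fin 3) → ℂ)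
    (hsym : ∀ (σ : Equiv.Perm (Fin (2 * n))) (ι : Fin (2 * n) → Fin 3), t (ι ∘ σ) = t ι)
    (hinv : ∀ (c : Fin 3) (ι : Fin (2 * n) → Fin 3),
      ∑ j : Fin (2 * n), ∑ b : Fin 3, fconst c (ι j) b * t (Function.update ι j b) = 0) :
    ∃ lam : ℂ, ∀ ι : Fin (2 * n) → Fin 3, t ι = lam * symdelta n ι := by
  refine ⟨t fun _ => 0, fun ι => ?_⟩
  rw [symdelta_eq_symmetrize]
  exact congrFun (stmt_10_general (consecutivePairing n) 0 hsym fun _ =>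
    tensorDeriv_eq_zero_of_fconst fun c => funext (hinv c)) ι
end

section
/- For all complex numbers z, w, x with z ≠ w, z ≠ x and w ≠ x, and all natural numbers p, q, the following rational-function identity holds: (−1)^{p+q}·p!·q! / ((z−x)^{p+1}·(w−x)^{q+1}) = (−1)^{p+1}·(p+q)! · ( 1/(z−x) − 1/(w−x) ) / (z−w)^{p+q+1} + Σ_{k=1}^{p} (−1)^{p+1} · C(p,k) · (p+q−k)! · k! / ( (z−x)^{k+1} · (z−w)^{p+q+1−k} ) − Σ_{k=1}^{q} (−1)^{p+1+k} · C(q,k) · (p+q−k)! · k! / ( (w−x)^{k+1} · (z−w)^{p+q+1−k} ), where C(p,k) denotes the binomial coefficient. (This is the scalar identity which, summed over the poles x = z_i, yields the commutation relations [A⁽ᵖ⁾(z), B⁽ᑫ⁾(w)] of the meromorphic currents A⁽ᵖ⁾(z) = Σᵢ (−1)ᵖ p! A⁽ⁱ⁾/(z−zᵢ)^{p+1}.) -/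
/-!
Put `u = (z - x)⁻¹`, `v = (w - x)⁻¹` and `e = (z - w)⁻¹`. These satisfy the semiring relation
`u * v = e * v + f * u` with `f = -e`. Rewriting `u ^ (p + 1) * v ^ (q + 1)` by this relation
until one of the two exponents reaches zero yields one term for each lattice path from
`(p + 1, q + 1)` to an axis, where a step weighted `e` lowers the exponent of `u` and a step
weighted `f` that of `v`. The binomial coefficients count these paths, and the sign changes of
the identity come from the powers of `f`.
-/

open Finset

section PrincipalPart

variable {R : Type*} [CommSemiring R]

/-- The part in powers of `u` of the partial-fraction expansion of `u ^ (p + 1) * v ^ (q + 1)`,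
for `u` and `v` related by `u * v = e * v + f * u`; the part in powers of `v` is
`principalPart f e v q p`. The summation index is the pair `(k, j)` with `k + j = p`, so that the
coefficient of `u ^ (k + 1)` involves no truncated subtraction. -/
def principalPart (e f u : R) (p q : ℕ) : R :=
  ∑ kj ∈ antidiagonal p, ((kj.2 + q).choose q : R) * e ^ kj.2 * f ^ (q + 1) * u ^ (kj.1 + 1)

lemma principalPart_zero_left (e f u : R) (q : ℕ) :
    principalPart e f u 0 q = f ^ (q + 1) * u := by
  simp [principalPart]

lemma principalPart_succ_zero (e f u : R) (p : ℕ) :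
    principalPart e f u (p + 1) 0 = e * principalPart e f u p 0 + f * u ^ (p + 2) := by
  simp only [principalPart, Nat.sum_antidiagonal_succ', mul_sum]
  rw [add_comm]
  congr 1
  · exact sum_congr rfl fun _ _ => by simp only [add_zero, Nat.choose_zero_right]; ring
  · simp

lemma principalPart_succ_succ (e f u : R) (p q : ℕ) :
    principalPart e f u (p + 1) (q + 1) =
      e * principalPart e f u p (q + 1) + f * principalPart e f u (p + 1) q := by
  have pascal (j : ℕ) : ((j + 1 + (q + 1)).choose (q + 1) : R) =
      (j + 1 + q).choose q + (j + (q + 1)).choose (q + 1) := by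
    rw [← add_assoc (j + 1), Nat.choose_succ_succ, add_right_comm j 1 q, add_assoc j q 1]
    exact Nat.cast_add _ _
  simp only [principalPart, Nat.sum_antidiagonal_succ', mul_add, mul_sum]
  rw [add_left_comm (∑ _ ∈ _, _), ← sum_add_distrib]
  congr 1
  · simp only [zero_add, Nat.choose_self]
    ring
  · refine sum_congr rfl fun kj _ => ?_
    rw [pascal]
    ring

lemma pow_succ_mul_eq_principalPart_add {e f u v : R} (h : u * v = e * v + f * u) (p : ℕ) :
    u ^ (p + 1) * v = principalPart e f u p 0 + e ^ (p + 1) * v := by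
  induction p with
  | zero => simp [principalPart_zero_left, h, add_comm]
  | succ p ih =>
    calc u ^ (p + 2) * v = u ^ (p + 1) * (u * v) := by ring
      _ = e * (u ^ (p + 1) * v) + f * u ^ (p + 2) := by rw [h]; ring
      _ = principalPart e f u (p + 1) 0 + e ^ (p + 2) * v := by
        rw [ih, principalPart_succ_zero]; ring

theorem pow_succ_mul_pow_succ_eq_principalPart_add {e f u v : R} (h : u * v = e * v + f * u)
    (p q : ℕ) :
    u ^ (p + 1) * v ^ (q + 1) = principalPart e f u p q + principalPart f e v q p := by
  induction p generalizing q with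
  | zero =>
    have h_swap : v * u = f * u + e * v := by rw [mul_comm, h, add_comm]
    rw [zero_add, pow_one, mul_comm, pow_succ_mul_eq_principalPart_add h_swap,
      principalPart_zero_left, add_comm]
  | succ p ihp =>
    induction q with
    | zero =>
      rw [zero_add, pow_one, pow_succ_mul_eq_principalPart_add h, principalPart_zero_left]
    | succ q ihq =>
      calc u ^ (p + 2) * v ^ (q + 2) = u ^ (p + 1) * v ^ (q + 1) * (u * v) := by ring
        _ = e * (u ^ (p + 1) * v ^ (q + 2)) + f * (u ^ (p + 2) * v ^ (q + 1)) := by rw [h]; ring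
        _ = principalPart e f u (p + 1) (q + 1) + principalPart f e v (q + 1) (p + 1) := by
          rw [ihp, ihq, principalPart_succ_succ, principalPart_succ_succ]; ring

end PrincipalPart

lemma factorial_mul_factorial_mul_add_choose (k j q : ℕ) :
    (k + j).factorial * q.factorial * (j + q).choose q =
      (k + j).choose k * (j + q).factorial * k.factorial := by
  rw [← Nat.add_choose_mul_factorial_mul_factorial k j,
    ← Nat.add_choose_mul_factorial_mul_factorial j q, Nat.choose_symm_add]
  ring

lemma sum_antidiagonal_eq_add_sum_Icc {M : Type*} [AddCommMonoid M] (g : ℕ × ℕ → M) (n : ℕ) :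
    ∑ kj ∈ antidiagonal n, g kj = g (0, n) + ∑ k ∈ Icc 1 n, g (k, n - k) := by
  rw [Nat.sum_antidiagonal_eq_sum_range_succ_mk, Nat.succ_eq_add_one, Nat.range_succ_eq_Icc_zero,
    ← add_sum_Ioc_eq_sum_Icc n.zero_le, Nat.sub_zero]
  rfl

lemma factorial_mul_principalPart {R : Type*} [CommSemiring R] (e f u : R) (p q : ℕ) :
    (p.factorial * q.factorial : R) * principalPart e f u p q =
      (p + q).factorial * (e ^ p * f ^ (q + 1) * u) +
        ∑ k ∈ Icc 1 p, (p.choose k * (p + q - k).factorial * k.factorial : R) *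
          (e ^ (p - k) * f ^ (q + 1) * u ^ (k + 1)) := by
  have term_eq {k j : ℕ} (hp : k + j = p) :
      (p.factorial * q.factorial : R) *
          ((j + q).choose q * e ^ j * f ^ (q + 1) * u ^ (k + 1)) =
        (p.choose k * (j + q).factorial * k.factorial : R) *
          (e ^ j * f ^ (q + 1) * u ^ (k + 1)) := by
    subst hp
    have h := congrArg (Nat.cast (R := R)) (factorial_mul_factorial_mul_add_choose k j q)
    push_cast at h
    rw [← h]
    ring
  rw [principalPart, mul_sum, sum_antidiagonal_eq_add_sum_Icc, term_eq (zero_add p)]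
  congr 1
  · simp
  · refine sum_congr rfl fun k hk => ?_
    have hkp : k ≤ p := (mem_Icc.mp hk).2
    rw [term_eq (Nat.add_sub_of_le hkp), Nat.sub_add_comm hkp]

section Signs

variable {R : Type*} [CommRing R]

lemma neg_one_pow_mul_factorial_mul_principalPart_neg_right (e u : R) (p q : ℕ) :
    (-1) ^ (p + q) * (p.factorial * q.factorial * principalPart e (-e) u p q) =
      (-1) ^ (p + 1) * (p + q).factorial * u * e ^ (p + q + 1) +
        ∑ k ∈ Icc 1 p, (-1) ^ (p + 1) * p.choose k * (p + q - k).factorial * k.factorial *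
          (u ^ (k + 1) * e ^ (p + q + 1 - k)) := by
  have sign : (-1 : R) ^ (p + q) * (-1) ^ (q + 1) = (-1) ^ (p + 1) := by
    rw [← pow_add, show p + q + (q + 1) = p + 1 + 2 * q by ring, pow_add, pow_mul]
    simp
  rw [factorial_mul_principalPart, mul_add, mul_sum, neg_pow e, ← sign]
  congr 1
  · ring
  · refine sum_congr rfl fun k hk => ?_
    have hkp : k ≤ p := (mem_Icc.mp hk).2
    rw [show p + q + 1 - k = p - k + (q + 1) by omega]
    ring

lemma neg_one_pow_mul_factorial_mul_principalPart_neg_left (e v : R) (p q : ℕ) :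
    (-1) ^ (p + q) * (p.factorial * q.factorial * principalPart (-e) e v q p) =
      -((-1) ^ (p + 1) * (p + q).factorial * v * e ^ (p + q + 1)) -
        ∑ k ∈ Icc 1 q, (-1) ^ (p + 1 + k) * q.choose k * (p + q - k).factorial * k.factorial *
          (v ^ (k + 1) * e ^ (p + q + 1 - k)) := by
  have sign {k : ℕ} (hk : k ≤ q) :
      (-1 : R) ^ (p + q) * (-1) ^ (q - k) = -(-1) ^ (p + 1 + k) := by
    obtain ⟨j, rfl⟩ := Nat.exists_eq_add_of_le hk
    rw [Nat.add_sub_cancel_left, ← pow_add, show p + (k + j) + j = p + k + 2 * j by ring, pow_add,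
      pow_mul, add_right_comm p 1 k]
    simp [pow_succ]
  rw [mul_comm (p.factorial : R), factorial_mul_principalPart, add_comm q p, mul_add, mul_sum,
    sub_eq_add_neg, ← sum_neg_distrib]
  congr 1
  · have sign_zero := sign q.zero_le
    simp only [Nat.sub_zero, add_zero] at sign_zero
    rw [neg_pow e]
    linear_combination ((p + q).factorial * e ^ q * e ^ (p + 1) * v : R) * sign_zero
  · refine sum_congr rfl fun k hk => ?_
    have hkq : k ≤ q := (mem_Icc.mp hk).2
    rw [show p + q + 1 - k = q - k + (p + 1) by omega, neg_pow e]
    linear_combination (q.choose k * (p + q - k).factorial * k.factorial * e ^ (q - k) *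
      e ^ (p + 1) * v ^ (k + 1) : R) * sign hkq

end Signs

lemma inv_sub_mul_inv_sub {K : Type*} [Field K] {z w x : K} (hzw : z ≠ w) (hzx : z ≠ x)
    (hwx : w ≠ x) :
    (z - x)⁻¹ * (w - x)⁻¹ = (z - w)⁻¹ * (w - x)⁻¹ + -(z - w)⁻¹ * (z - x)⁻¹ := by
  have := sub_ne_zero.mpr hzw
  have := sub_ne_zero.mpr hzx
  have := sub_ne_zero.mpr hwx
  field_simp
  ring

theorem stmt_11_general {K : Type*} [Field K] (z w x : K) (hzw : z ≠ w) (hzx : z ≠ x)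
    (hwx : w ≠ x) (p q : ℕ) :
    (-1) ^ (p + q) * (p.factorial : K) * (q.factorial : K)
        / ((z - x) ^ (p + 1) * (w - x) ^ (q + 1)) =
      (-1) ^ (p + 1) * ((p + q).factorial : K) * (1 / (z - x) - 1 / (w - x))
          / (z - w) ^ (p + q + 1)
        + ∑ k ∈ Icc 1 p,
            (-1) ^ (p + 1) * (p.choose k : K) * ((p + q - k).factorial : K)
              * (k.factorial : K) / ((z - x) ^ (k + 1) * (z - w) ^ (p + q + 1 - k))
        - ∑ k ∈ Icc 1 q,
            (-1) ^ (p + 1 + k) * (q.choose k : K) * ((p + q - k).factorial : K)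
              * (k.factorial : K) / ((w - x) ^ (k + 1) * (z - w) ^ (p + q + 1 - k)) := by
  have expansion :=
    pow_succ_mul_pow_succ_eq_principalPart_add (inv_sub_mul_inv_sub hzw hzx hwx) p q
  have z_part :=
    neg_one_pow_mul_factorial_mul_principalPart_neg_right (z - w)⁻¹ (z - x)⁻¹ p q
  have w_part :=
    neg_one_pow_mul_factorial_mul_principalPart_neg_left (z - w)⁻¹ (w - x)⁻¹ p q
  simp only [div_eq_mul_inv, mul_inv, ← inv_pow, one_mul]
  linear_combination
    (-1) ^ (p + q) * (p.factorial : K) * q.factorial * expansion + z_part + w_part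

/-- The partial-fraction identity underlying the commutation relations
`[A⁽ᵖ⁾(z), B⁽ᑫ⁾(w)]` of the meromorphic currents
`A⁽ᵖ⁾(z) = Σᵢ (−1)ᵖ p! A⁽ⁱ⁾/(z−zᵢ)^(p+1)`. -/
theorem stmt_11 (z w x : ℂ) (hzw : z ≠ w) (hzx : z ≠ x) (hwx : w ≠ x) (p q : ℕ) :
    (-1) ^ (p + q) * (p.factorial : ℂ) * (q.factorial : ℂ)
        / ((z - x) ^ (p + 1) * (w - x) ^ (q + 1)) =
      (-1) ^ (p + 1) * ((p + q).factorial : ℂ) * (1 / (z - x) - 1 / (w - x))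
          / (z - w) ^ (p + q + 1)
        + ∑ k ∈ Finset.Icc 1 p,
            (-1) ^ (p + 1) * (p.choose k : ℂ) * ((p + q - k).factorial : ℂ)
              * (k.factorial : ℂ) / ((z - x) ^ (k + 1) * (z - w) ^ (p + q + 1 - k))
        - ∑ k ∈ Finset.Icc 1 q,
            (-1) ^ (p + 1 + k) * (q.choose k : ℂ) * ((p + q - k).factorial : ℂ)
              * (k.factorial : ℂ) / ((w - x) ^ (k + 1) * (z - w) ^ (p + q + 1 - k)) :=
  stmt_11_general z w x hzw hzx hwx p q
end

section
/- Let V be the free ℂ-vector space with basis consisting of symbols J(a,m,p) for a ∈ Fin 3, m ∈ ℤ, p ∈ ℕ, and K(p) for p ∈ ℕ. Define a bilinear bracket on V by [J(a,m,p), J(b,n,q)] := −(p!·q!/(p+q+1)!) · ( Σ_{c ∈ Fin 3} f(a,b,c)·J(c, m+n, p+q+1) − n·δ(a,b)·[m+n=0]·K(p+q+1) ), and [K(p), v] = [v, K(p)] = 0 for all basis vectors v. Then this bracket is alternating ([x,x] = 0 for all x ∈ V) and satisfies the Jacobi identity [[x,y],z] + [[y,z],x] + [[z,x],y] = 0 for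 all x, y, z ∈ V; hence it makes V a complex Lie algebra (the Lie algebra 𝔏 of meromorphic currents of the affine sl₂ Gaudin model). -/
/-- Basis symbols of the Lie algebra `𝔏` of meromorphic currents: the currents
`J(a,m,p) = Iᵃ⁽ᵖ⁾ₘ(z)` and the central currents `K(p) = 𝗄⁽ᵖ⁾(z)`. -/
inductive GB where
  | J : Fin 3 → ℤ → ℕ → GB
  | K : ℕ → GB

/-- The bracket of two basis vectors, as an element of the free vector space on `GB`:
`[J(a,m,p), J(b,n,q)] = −(p!q!/(p+q+1)!)(Σ_c f(a,b,c) J(c,m+n,p+q+1)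
  − n δ(a,b) [m+n=0] K(p+q+1))`, and `K(p)` is central. -/
noncomputable def gbBracket : GB → GB → (GB →₀ ℂ)
  | GB.J a m p, GB.J b n q =>
      (-(((p.factorial : ℂ) * (q.factorial : ℂ)) / ((p + q + 1).factorial : ℂ))) •
        ((∑ c : Fin 3, fconst a b c • Finsupp.single (GB.J c (m + n) (p + q + 1)) (1 : ℂ))
          - ((n : ℂ) * kdelta a b * (if m + n = 0 then 1 else 0)) •
              Finsupp.single (GB.K (p + q + 1)) (1 : ℂ))
  | _, _ => 0

/-- The bilinear extension of `gbBracket` to the free vector space `GB →₀ ℂ`. -/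
noncomputable def lBracket (x y : GB →₀ ℂ) : GB →₀ ℂ :=
  x.sum fun u cu => y.sum fun v cv => (cu * cv) • gbBracket u v

/-!
The space `V` sits inside the Lie algebra `ℂ[X] ⊗ ŝl₂` of affine-valued polynomial currents via
`J(a,m,p) ↦ e_p ⊗ Iᵃtᵐ` and `K(p) ↦ e_p ⊗ k`. The polynomials `e_p = -p! Xᵖ⁺¹` absorb the
factorials, since `e_p e_q = -(p! q! / (p+q+1)!) e_{p+q+1}`, so the defining bracket is that of
`ℂ[X] ⊗ ŝl₂`. As the basis symbols have linearly independent images, alternation and the Jacobi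
identity pull back along this embedding.
-/

open LieAlgebra LieAlgebra.LoopAlgebra LieAlgebra.SpecialLinear
open scoped TensorProduct Polynomial

section LieRing

theorem lie_lie_cyclic {L : Type*} [LieRing L] (x y z : L) :
    ⁅⁅x, y⁆, z⁆ + ⁅⁅y, z⁆, x⁆ + ⁅⁅z, x⁆, y⁆ = 0 := by
  simpa only [neg_add, lie_skew, neg_zero] using congrArg Neg.neg (lie_jacobi z x y)

theorem linearCombination_sum_sum {ι R L : Type*} [CommRing R] [LieRing L] [LieAlgebra R L]
    {v : ι → L} {b : ι → ι → ι →₀ R}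
    (hb : ∀ i j, Finsupp.linearCombination R v (b i j) = ⁅v i, v j⁆) (x y : ι →₀ R) :
    Finsupp.linearCombination R v (x.sum fun i r ↦ y.sum fun j s ↦ (r * s) • b i j) =
      ⁅Finsupp.linearCombination R v x, Finsupp.linearCombination R v y⁆ := by
  simp only [Finsupp.linearCombination_apply R x, Finsupp.linearCombination_apply R y,
    Finsupp.sum, map_sum, map_smul, hb, sum_lie_sum, smul_lie, lie_smul, smul_smul,
    mul_comm (y _)]

end LieRing

section AffineAlgebra

variable {R L : Type*} [CommRing R] [LieRing L] [LieAlgebra R L] {Φ : LinearMap.BilinForm R L}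

theorem residuePairing_single_tmul_single_tmul {A : Type*} [AddCommGroup A] [DecidableEq A]
    [DistribSMul A R] [SMulCommClass A R R] (a b : A) (x y : L) :
    residuePairing R A L Φ (AddMonoidAlgebra.single a 1 ⊗ₜ x)
      (AddMonoidAlgebra.single b 1 ⊗ₜ y) = if a + b = 0 then b • Φ x y else 0 := by
  rw [residuePairing_apply_apply, toFinsupp_single_tmul, toFinsupp_single_tmul,
    Finsupp.sum_single_index (by simp), Finsupp.single_apply]
  simp only [eq_neg_iff_add_eq_zero]
  split_ifs <;> simp

variable [IsAddTorsionFree R]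

/-- The affine Lie algebra `L[t, t⁻¹] ⊕ R` of a Lie algebra `L` with invariant symmetric form `Φ`
(without derivation), as the central extension of the loop algebra by the residue cocycle. -/
abbrev AffineAlgebra (hΦ : Φ.lieInvariant L) (hΦs : Φ.IsSymm) : Type _ :=
  ofTwoCocycle (twoCocycleOfBilinear R ℤ L Φ hΦ hΦs)

namespace AffineAlgebra

variable (hΦ : Φ.lieInvariant L) (hΦs : Φ.IsSymm)

/-- The underlying module of the affine Lie algebra is the direct sum of the loop algebra and a
copy of `R`. -/
noncomputable def ofProdEquiv : (loopAlgebra R ℤ L × R) ≃ₗ[R] AffineAlgebra hΦ hΦs :=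
  ((LinearEquiv.refl R _).prodCongr (TrivialLieModule.equiv R (loopAlgebra R ℤ L) R).symm).trans
    ((ofProd (twoCocycleOfBilinear R ℤ L Φ hΦ hΦs)).symm.linearEquiv R).symm

/-- The mode `x tᵐ` of an element `x` of `L`. -/
noncomputable def mode (m : ℤ) : L →ₗ[R] AffineAlgebra hΦ hΦs :=
  (ofProdEquiv hΦ hΦs).toLinearMap ∘ₗ LinearMap.inl R _ R ∘ₗ
    TensorProduct.mk R _ L (AddMonoidAlgebra.single m 1)

/-- The canonical central element `k`. The sign is that of the usual convention
`[x tᵐ, y tⁿ] = [x, y] tᵐ⁺ⁿ + m Φ(x, y) k` for `m + n = 0`, whereas the residue cocycle of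
Mathlib is `n Φ(x, y)`. -/
noncomputable def central : AffineAlgebra hΦ hΦs :=
  ofProdEquiv hΦ hΦs (0, -1)

theorem ofProdEquiv_lie_ofProdEquiv (f g : loopAlgebra R ℤ L) (r s : R) :
    ⁅ofProdEquiv hΦ hΦs (f, r), ofProdEquiv hΦ hΦs (g, s)⁆ =
      ofProdEquiv hΦ hΦs (⁅f, g⁆, residuePairing R ℤ L Φ f g) := by
  change ofProd _ (⁅f, g⁆, _ + ⁅f, _⁆ - ⁅g, _⁆) = _
  rw [trivial_lie_zero (loopAlgebra R ℤ L) (TrivialLieModule R (loopAlgebra R ℤ L) R) f,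
    trivial_lie_zero (loopAlgebra R ℤ L) (TrivialLieModule R (loopAlgebra R ℤ L) R) g,
    add_zero, sub_zero]
  rfl

theorem mode_lie_mode (m n : ℤ) (x y : L) :
    ⁅mode hΦ hΦs m x, mode hΦ hΦs n y⁆ =
      mode hΦ hΦs (m + n) ⁅x, y⁆ -
        ((n : R) * Φ x y * if m + n = 0 then 1 else 0) • central hΦ hΦs := by
  have hbracket : ⁅mode hΦ hΦs m x, mode hΦ hΦs n y⁆ = ofProdEquiv hΦ hΦs
      (AddMonoidAlgebra.single (m + n) 1 ⊗ₜ ⁅x, y⁆,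
        (n : R) * Φ x y * if m + n = 0 then 1 else 0) := by
    rw [mul_ite, mul_one, mul_zero, ← zsmul_eq_mul, ← residuePairing_single_tmul_single_tmul,
      ← mul_one (1 : R), ← AddMonoidAlgebra.single_mul_single, ← ExtendScalars.bracket_tmul,
      mul_one]
    exact ofProdEquiv_lie_ofProdEquiv hΦ hΦs _ _ 0 0
  rw [hbracket, mode, central, ← map_smul]
  simp only [LinearMap.comp_apply, LinearEquiv.coe_coe, ← map_sub]
  congr 1
  simp only [LinearMap.inl_apply, TensorProduct.mk_apply, Prod.smul_mk, smul_zero, smul_eq_mul,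
    mul_neg, mul_one, Prod.mk_sub_mk, sub_zero, sub_neg_eq_add, zero_add]

theorem central_lie (x : AffineAlgebra hΦ hΦs) : ⁅central hΦ hΦs, x⁆ = 0 := by
  obtain ⟨⟨g, s⟩, rfl⟩ := (ofProdEquiv hΦ hΦs).surjective x
  have hzero : ⁅(0 : loopAlgebra R ℤ L), g⁆ = 0 := zero_lie g
  rw [central, ofProdEquiv_lie_ofProdEquiv, hzero, map_zero, LinearMap.zero_apply,
    Prod.mk_zero_zero, map_zero]

theorem lie_central (x : AffineAlgebra hΦ hΦs) : ⁅x, central hΦ hΦs⁆ = 0 := by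
  rw [← lie_skew, central_lie, neg_zero]

theorem linearIndependent_mode_central {ι : Type*} {v : ι → L} (hv : LinearIndependent R v) :
    LinearIndependent R
      (Sum.elim (fun i : ℤ × ι ↦ mode hΦ hΦs i.1 (v i.2)) fun _ : Unit ↦ central hΦ hΦs) := by
  have hloop := (AddMonoidAlgebra.basis ℤ R).linearIndependent.tmul_of_flat_left hv
  have hcentral : LinearIndependent R fun _ : Unit ↦ (-1 : R) := by
    simpa [Units.smul_def, Pi.smul_def'] using
      (Module.Basis.singleton Unit R).linearIndependent.units_smul fun _ ↦ -1
  convert! (linearIndependent_inl_union_inr' hloop hcentral).map'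
    (ofProdEquiv hΦ hΦs).toLinearMap (LinearEquiv.ker _) using 1
  ext1 (i | _)
  · simp [mode]
  · rfl

end AffineAlgebra

end AffineAlgebra

section Pauli

open Matrix

attribute [local instance] LieRing.ofAssociativeRing

theorem traceForm_sl_apply {n R : Type*} [Fintype n] [DecidableEq n] [CommRing R]
    (x y : sl n R) : LieModule.traceForm R (sl n R) (n → R) x y = (x.1 * y.1).trace := by
  rw [LieModule.traceForm_apply_apply]
  change LinearMap.trace R _ (toLin' x.1 ∘ₗ toLin' y.1) = _
  rw [← toLin'_mul, trace_toLin'_eq]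

/-- The Pauli matrices `σ₁, σ₂, σ₃`. -/
def pauli : Fin 3 → Matrix (Fin 2) (Fin 2) ℂ :=
  ![!![0, 1; 1, 0], !![0, -Complex.I; Complex.I, 0], !![1, 0; 0, -1]]

theorem trace_pauli (a : Fin 3) : (pauli a).trace = 0 := by
  fin_cases a <;> simp [pauli, trace_fin_two]

theorem pauli_lie_pauli (a b : Fin 3) :
    ⁅pauli a, pauli b⁆ = ∑ c, (2 * Complex.I * lev a b c) • pauli c := by
  fin_cases a <;> fin_cases b <;> ext i j <;> fin_cases i <;> fin_cases j <;>
    simp [pauli, lev, Ring.lie_def] <;> grind [Complex.I_mul_I]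

theorem trace_pauli_mul_pauli (a b : Fin 3) : (pauli a * pauli b).trace = 2 * kdelta a b := by
  fin_cases a <;> fin_cases b <;> simp [pauli, kdelta, trace_fin_two, one_add_one_eq_two]

theorem inv_sqrt_two_mul_inv_sqrt_two : (Real.sqrt 2 : ℂ)⁻¹ * (Real.sqrt 2 : ℂ)⁻¹ = 2⁻¹ := by
  rw [← mul_inv, ← Complex.ofReal_mul, Real.mul_self_sqrt zero_le_two, Complex.ofReal_ofNat]

/-- The Pauli matrices rescaled to an orthonormal basis `Iᵃ` of `sl(2, ℂ)` for the trace form. -/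
noncomputable def orthonormalPauli (a : Fin 3) : sl (Fin 2) ℂ :=
  ⟨(Real.sqrt 2 : ℂ)⁻¹ • pauli a, by
    change ((Real.sqrt 2 : ℂ)⁻¹ • pauli a).trace = 0
    rw [trace_smul, trace_pauli, smul_zero]⟩

theorem orthonormalPauli_lie_orthonormalPauli (a b : Fin 3) :
    ⁅orthonormalPauli a, orthonormalPauli b⁆ = ∑ c, fconst a b c • orthonormalPauli c := by
  ext1
  rw [sl_bracket, AddSubmonoidClass.coe_finsetSum]
  simp only [orthonormalPauli, SetLike.val_smul, smul_mul_smul_comm]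
  rw [← smul_sub, ← Ring.lie_def, pauli_lie_pauli, Finset.smul_sum]
  refine Finset.sum_congr rfl fun c _ ↦ ?_
  rw [smul_smul, smul_smul, fconst]
  congr 1
  rw [inv_sqrt_two_mul_inv_sqrt_two]
  field_simp

theorem traceForm_orthonormalPauli (a b : Fin 3) :
    LieModule.traceForm ℂ (sl (Fin 2) ℂ) (Fin 2 → ℂ) (orthonormalPauli a) (orthonormalPauli b) =
      kdelta a b := by
  simp only [orthonormalPauli, traceForm_sl_apply, smul_mul_smul_comm, trace_smul,
    trace_pauli_mul_pauli, smul_eq_mul, inv_sqrt_two_mul_inv_sqrt_two]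
  exact inv_mul_cancel_left₀ two_ne_zero _

theorem linearIndependent_orthonormalPauli : LinearIndependent ℂ orthonormalPauli := by
  refine LinearMap.BilinForm.linearIndependent_of_iIsOrtho
    (B := LieModule.traceForm ℂ (sl (Fin 2) ℂ) (Fin 2 → ℂ)) (fun a b hab ↦ ?_) fun a ↦ ?_
  · simp [Function.onFun, traceForm_orthonormalPauli, kdelta, hab]
  · simp [traceForm_orthonormalPauli, kdelta]

end Pauli

section Realization

open AffineAlgebra

/-- The derivative `∂ᵖ/∂zᵖ (z - w)⁻¹ = -p! (w - z)⁻ᵖ⁻¹` attached to a current of level `p`, written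
as a polynomial in `X = (w - z)⁻¹`. -/
noncomputable def poleDeriv (p : ℕ) : ℂ[X] := Polynomial.monomial (p + 1) (-(p.factorial : ℂ))

theorem poleDeriv_mul (p q : ℕ) :
    poleDeriv p * poleDeriv q =
      (-((p.factorial : ℂ) * q.factorial / (p + q + 1).factorial)) • poleDeriv (p + q + 1) := by
  have hne : ((p + q + 1).factorial : ℂ) ≠ 0 := by exact_mod_cast Nat.factorial_ne_zero _
  rw [poleDeriv, poleDeriv, poleDeriv, Polynomial.monomial_mul_monomial,
    Polynomial.smul_monomial]
  congr 1
  · rw [add_right_comm, ← add_assoc]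
  · rw [smul_eq_mul]; field_simp

theorem linearIndependent_poleDeriv : LinearIndependent ℂ poleDeriv := by
  have hunit (p : ℕ) : IsUnit (-(p.factorial : ℂ)) := by
    simpa using p.factorial_ne_zero
  convert! ((Polynomial.basisMonomials ℂ).linearIndependent.comp _
    (Nat.succ_injective)).units_smul fun p ↦ (hunit p).unit using 1
  ext1 p
  simp [poleDeriv, Units.smul_def, Polynomial.smul_monomial]

/-- The affine Lie algebra of `sl(2, ℂ)` with respect to the trace form of its defining
representation. -/
abbrev AffineSl2 : Type :=
  AffineAlgebra (LieModule.traceForm_lieInvariant ℂ (sl (Fin 2) ℂ) (Fin 2 → ℂ))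
    ⟨LieModule.traceForm_comm ℂ (sl (Fin 2) ℂ) (Fin 2 → ℂ)⟩

/-- The realization of the basis symbols of `𝔏` as currents with values in the affine Lie algebra:
`J(a,m,p) ↦ ∂ᵖ(z - w)⁻¹ ⊗ Iᵃtᵐ` and `K(p) ↦ ∂ᵖ(z - w)⁻¹ ⊗ k`. -/
noncomputable def realize : GB → ℂ[X] ⊗[ℂ] AffineSl2
  | GB.J a m p => poleDeriv p ⊗ₜ mode _ _ m (orthonormalPauli a)
  | GB.K p => poleDeriv p ⊗ₜ central _ _

/-- The pole level `p` of a basis symbol, together with its affine part `Iᵃtᵐ` or `k`, the latter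
encoded as an index of the linearly independent family of modes and the central element. -/
def GB.split : GB → ℕ × (ℤ × Fin 3 ⊕ Unit)
  | GB.J a m p => (p, .inl (m, a))
  | GB.K p => (p, .inr ())

theorem GB.split_injective : Function.Injective GB.split := by
  rintro (⟨a, m, p⟩ | p) (⟨b, n, q⟩ | q) h <;> simp_all [GB.split]

theorem linearIndependent_realize : LinearIndependent ℂ realize := by
  convert! (linearIndependent_poleDeriv.tmul_of_isDomain
    (linearIndependent_mode_central _ _ linearIndependent_orthonormalPauli)).comp
    GB.split GB.split_injective using 1
  ext1 u
  cases u <;> rfl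

theorem realize_J_lie_realize_J (a b : Fin 3) (m n : ℤ) (p q : ℕ) :
    ⁅realize (GB.J a m p), realize (GB.J b n q)⁆ =
      (-((p.factorial : ℂ) * q.factorial / (p + q + 1).factorial)) •
        (∑ c, fconst a b c • realize (GB.J c (m + n) (p + q + 1)) -
          ((n : ℂ) * kdelta a b * if m + n = 0 then 1 else 0) • realize (GB.K (p + q + 1))) := by
  simp only [realize]
  rw [ExtendScalars.bracket_tmul, poleDeriv_mul, ← TensorProduct.smul_tmul', mode_lie_mode,
    orthonormalPauli_lie_orthonormalPauli, traceForm_orthonormalPauli]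
  simp only [map_sum, map_smul, TensorProduct.tmul_sub, TensorProduct.tmul_sum,
    TensorProduct.tmul_smul]

theorem linearCombination_gbBracket (u v : GB) :
    Finsupp.linearCombination ℂ realize (gbBracket u v) = ⁅realize u, realize v⁆ := by
  rcases u with ⟨a, m, p⟩ | p <;> rcases v with ⟨b, n, q⟩ | q
  · simp only [realize_J_lie_realize_J, gbBracket, map_smul, map_sub, map_sum,
      Finsupp.linearCombination_single, one_smul]
  all_goals simp [gbBracket, realize, central_lie, lie_central]

theorem linearCombination_lBracket (x y : GB →₀ ℂ) :
    Finsupp.linearCombination ℂ realize (lBracket x y) =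
      ⁅Finsupp.linearCombination ℂ realize x, Finsupp.linearCombination ℂ realize y⁆ :=
  linearCombination_sum_sum linearCombination_gbBracket x y

end Realization

/-- The bracket on the free vector space on the symbols `J(a,m,p)`, `K(p)` is alternating
and satisfies the Jacobi identity, hence makes it a complex Lie algebra: the Lie algebra
`𝔏` of meromorphic currents of the affine `sl₂` Gaudin model. -/
theorem stmt_12 :
    (∀ x : GB →₀ ℂ, lBracket x x = 0) ∧
    (∀ x y z : GB →₀ ℂ,
      lBracket (lBracket x y) z + lBracket (lBracket y z) x
        + lBracket (lBracket z x) y = 0) := by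
  have injective : Function.Injective (Finsupp.linearCombination ℂ realize) :=
    linearIndependent_realize
  refine ⟨fun x ↦ injective ?_, fun x y z ↦ injective ?_⟩
  · rw [linearCombination_lBracket, lie_self, map_zero]
  · simp only [map_add, map_zero, linearCombination_lBracket]
    exact lie_lie_cyclic _ _ _
end
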